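/- Let T be a c.e.m.p.t. on a σ-finite measure space (X,𝒜,μ) with μ(X)=∞. Assume Y∈𝒜 is a Darling–Kac set with return sequence a_n=a_T(n), where a_T∈R_α for some α∈(0,1]; let b_T be the inverse of a_T and γ_T(s):=1/b_T(1/s). Suppose E_k⊆Y (k≥1) are measurable sets of positive measure with μ(E_k)→0. Then the following are equivalent: (i) there exists F∈ℱ satisfying F(t)=∫_0^t [1−F(s)]·α·(t−s)^{α−1} ds for all t≥0 such that both μ_{E_k}(γ_T(μ(E_k))·φ_{E_k} ≤ t) ⇒ F(t) and μ_Y(γ_T(μ(E_k))·φ_{E_k} ≤ t) ⇒ F(t); (ii) for a dense set of points t in (0,∞), μ_{E_k}(γ_T(μ(E_k))·φ_{E_k} ≤ t) − μ_Y(γ_T(μ(E_k))·φ_{E_k} ≤ t) → 0 as k→∞. (The F in (i) is exactly the distribution function H_α of 𝓔^{1/α}·𝒢_α, with 𝓔 standard exponential and 𝒢_α one-sided α-stable, independent.) -/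

import Mathlib

/-!
The proof rests on an exact last-visit decomposition. For `E ⊆ Y` and `n : ℕ`, splitting the event
`{φ_E ≤ n}` in `Y` according to the last visit to `E` before time `n` gives
`μ(Y ∩ {φ_E ≤ n}) = ∑_{j=1}^{n} ∫_{E ∩ {φ_E > n - j}} û_j dμ` with `û_j = dkDens T μ Y j`, i.e. the
integral over `E` of `∑_{j ≤ n} û_j - ∑_{j ≤ n - τ} û_j`, where `τ = min (φ_E, n)`
(`measure_hit_eq_integral`).

The Darling–Kac property replaces these partial sums by `a (n + 1)` and `a (n - τ + 1)`, uniformly on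
`Y` (`dk_uniform`), and regular variation replaces the latter, after division by `a (b (1 / μ E))`, by
`t ^ α` and `(t - min (γ φ_E) t) ^ α`, uniformly (`regVary_uniform`). By the layer-cake formula
(`integral_truncTime_eq`) the hitting-time distribution function `G_k` is therefore asymptotic, at each
`t > 0`, to the transform `hitTr α R_k t = ∫₀ᵗ (1 - R_k(s)) α (t - s) ^ (α - 1) ds` of the return-time
distribution function `R_k` (`abs_hit_sub_hitTr_le`). This holds without any further assumption.

If both distributions converge to the same `F`, their difference tends to `0` at all continuity points
of `F`, which are dense. Conversely, if `R_k - G_k → 0` on a dense set, monotonicity of `R_k` and a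
Hölder bound for `hitTr` give `R_k - hitTr α R_k → 0` at every `t > 0` (`sub_hitTr_tendsto_of_dense`).
The upper and lower limits `L`, `l` of `R_k` then satisfy `L ≤ hitTr α l` and `hitTr α L ≤ l`, so
`L - l` is bounded by its own Abel integral and vanishes (`volterra_eq_zero`). Hence `R_k` converges to
a fixed point of `hitTr α`, and so does `G_k` (`exists_limit_of_sub_hitTr`); neither a compactness
argument nor prior existence of the fixed point is used.
-/

open MeasureTheory Filter Set Topology ENNReal

noncomputable section

/-- First entrance/return time of `E` under `T`, valued in `ℝ≥0∞` (`∞` if the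
forward orbit never enters `E`). -/
def phiRT {X : Type*} (T : X → X) (E : Set X) (x : X) : ℝ≥0∞ :=
  ⨅ n ∈ {n : ℕ | 0 < n ∧ T^[n] x ∈ E}, (n : ℝ≥0∞)

/-- Conditional (sub)probability `μ_E(A) = μ(E∩A)/μ(E)`, as a real number. -/
def condProb {X : Type*} [MeasurableSpace X] (μ : Measure X) (E A : Set X) : ℝ :=
  (μ (E ∩ A) / μ E).toReal

/-- Conservative ergodic measure preserving transformation. -/
def CEMPT {X : Type*} [MeasurableSpace X] (T : X → X) (μ : Measure X) : Prop :=
  Conservative T μ ∧ Ergodic T μ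

/-- Membership in the class ℱ of sub-probability distribution functions on `[0,∞)`. -/
def MemF (F : ℝ → ℝ) : Prop :=
  (∀ ⦃s t : ℝ⦄, 0 ≤ s → s ≤ t → F s ≤ F t) ∧
  (∀ t, 0 ≤ t → F t ∈ Set.Icc (0 : ℝ) 1) ∧
  (∀ t, 0 ≤ t → ContinuousWithinAt F (Set.Ici t) t)

/-- Vague convergence `Fₙ ⇒ F` of sub-distribution functions on `[0,∞)`:
convergence at every continuity point of `F` in `[0,∞)`. -/
def VagueConv (Fn : ℕ → ℝ → ℝ) (F : ℝ → ℝ) : Prop :=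
  ∀ t, 0 ≤ t → ContinuousWithinAt F (Set.Ici 0) t →
    Tendsto (fun n => Fn n t) atTop (𝓝 (F t))

/-- A scaling function: a homeomorphism of `[0,∞)`. -/
def IsScalingFunction (γ : ℝ → ℝ) : Prop :=
  γ 0 = 0 ∧ StrictMonoOn γ (Set.Ici 0) ∧ ContinuousOn γ (Set.Ici 0) ∧
  (∀ x, 0 ≤ x → 0 ≤ γ x) ∧ (∀ y, 0 ≤ y → ∃ x, 0 ≤ x ∧ γ x = y)

/-- Regular variation of index `α` at infinity. -/
def RegVary (a : ℝ → ℝ) (α : ℝ) : Prop :=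
  ∀ c : ℝ, 0 < c → Tendsto (fun t => a (c * t) / a t) atTop (𝓝 (c ^ α))

/-- The transfer operator iterate `T̂^k 1_Y` (unnormalized): the Radon–Nikodym
derivative w.r.t. `μ` of the pushforward under `T^k` of `μ` restricted to `Y`. -/
def dkDens {X : Type*} [MeasurableSpace X] (T : X → X) (μ : Measure X) (Y : Set X)
    (k : ℕ) : X → ℝ≥0∞ :=
  (Measure.map (T^[k]) (μ.restrict Y)).rnDeriv μ

/-- `Y` is a Darling–Kac set with return sequence `n ↦ a n`:
`(1/aₙ) Σ_{k<n} T̂^k (1_Y/μ(Y)) → 1` uniformly (mod μ) on `Y`. -/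
def IsDKSet {X : Type*} [MeasurableSpace X] (T : X → X) (μ : Measure X) (Y : Set X)
    (a : ℝ → ℝ) : Prop :=
  MeasurableSet Y ∧ 0 < μ Y ∧ μ Y < ∞ ∧
  ∀ ε : ℝ, 0 < ε → ∃ N : ℕ, ∀ n ≥ N,
    ∀ᵐ x ∂μ.restrict Y,
      |(∑ k ∈ Finset.range n, (dkDens T μ Y k x).toReal) / (μ Y).toReal / a n - 1| ≤ ε

/-- Normalized return/hitting distribution function: the distribution, under `μ_A`,
of `γ(μ(E))·φ_E` evaluated at `t`. -/
def nrmDF {X : Type*} [MeasurableSpace X] (μ : Measure X) (T : X → X) (γ : ℝ → ℝ)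
    (A E : Set X) (t : ℝ) : ℝ :=
  condProb μ A {x | ENNReal.ofReal (γ (μ E).toReal) * phiRT T E x ≤ ENNReal.ofReal t}

/-! ### The Abel kernel and its Volterra inequality -/

/-- The Abel kernel `s ↦ α (t - s) ^ (α - 1)`, whose integral over `[0, t]` is `t ^ α`. -/
def abelKer (α t s : ℝ) : ℝ := α * (t - s) ^ (α - 1)

lemma abelKer_nonneg {α t s : ℝ} (hα : 0 < α) (hs : s ≤ t) : 0 ≤ abelKer α t s :=
  mul_nonneg hα.le (Real.rpow_nonneg (by linarith) _)

lemma measurable_abelKer (α t : ℝ) : Measurable (abelKer α t) := by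
  unfold abelKer; fun_prop

lemma abelKer_intervalIntegrable {α : ℝ} (hα : 0 < α) (t a b : ℝ) :
    IntervalIntegrable (abelKer α t) volume a b := by
  have h := (intervalIntegral.intervalIntegrable_rpow' (a := t - a) (b := t - b)
    (r := α - 1) (by linarith)).comp_sub_left t
  simp only [_root_.sub_sub_cancel] at h
  exact h.const_mul α

lemma integral_abelKer {α : ℝ} (hα : 0 < α) (t a b : ℝ) :
    ∫ s in a..b, abelKer α t s = (t - a) ^ α - (t - b) ^ α := by
  unfold abelKer
  rw [intervalIntegral.integral_const_mul,
    intervalIntegral.integral_comp_sub_left (fun x => x ^ (α - 1)) t,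
    integral_rpow (Or.inl (by linarith))]
  simp only [sub_add_cancel]
  field_simp

lemma mul_abelKer_intervalIntegrable {α : ℝ} (hα : 0 < α) {f : ℝ → ℝ} (hf : Measurable f) {C : ℝ}
    (hb : ∀ s, |f s| ≤ C) (t a b : ℝ) :
    IntervalIntegrable (fun s => f s * abelKer α t s) volume a b := by
  refine ((abelKer_intervalIntegrable hα t a b).const_mul C).mono_fun
    (hf.mul (measurable_abelKer α t)).aestronglyMeasurable (Eventually.of_forall fun s => ?_)
  simp only [norm_mul, Real.norm_eq_abs]
  exact mul_le_mul_of_nonneg_right ((hb s).trans (le_abs_self C)) (abs_nonneg _)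

/-- For large `lam` the Laplace transform of the Abel kernel at `lam` is at most `1/2`. -/
lemma exists_laplace_ker_le {α : ℝ} (hα : 0 < α) :
    ∃ lam : ℝ, 0 < lam ∧ ∀ t : ℝ, 0 < t →
      ∫ s in (0 : ℝ)..t, Real.exp (lam * s) * abelKer α t s ≤ (1 / 2) * Real.exp (lam * t) := by
  have hlim : Tendsto (fun r : ℝ => α * ((1 / r) ^ α * Real.Gamma α)) atTop (𝓝 0) := by
    have h1 : Tendsto (fun r : ℝ => r ^ (-α)) atTop (𝓝 0) := tendsto_rpow_neg_atTop hα
    have h2 := (h1.mul_const (Real.Gamma α)).const_mul α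
    simp only [zero_mul, mul_zero] at h2
    refine h2.congr' ?_
    filter_upwards [eventually_gt_atTop 0] with r hr
    rw [one_div, Real.inv_rpow hr.le, Real.rpow_neg hr.le]
  obtain ⟨lam, hlam0, hlam⟩ := ((eventually_gt_atTop (0 : ℝ)).and
    (hlim.eventually (Iic_mem_nhds (show (0 : ℝ) < 1 / 2 by norm_num)))).exists
  refine ⟨lam, hlam0, fun t ht => ?_⟩
  have hsub : ∫ s in (0 : ℝ)..t, Real.exp (lam * s) * abelKer α t s
      = ∫ u in (0 : ℝ)..t, Real.exp (lam * t) * (α * (u ^ (α - 1) * Real.exp (-(lam * u)))) := by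
    have := intervalIntegral.integral_comp_sub_left (a := 0) (b := t)
      (fun u => Real.exp (lam * t) * (α * (u ^ (α - 1) * Real.exp (-(lam * u))))) t
    simp only [sub_self, sub_zero] at this
    rw [← this]
    refine intervalIntegral.integral_congr fun s _ => ?_
    simp only [abelKer]
    have : Real.exp (lam * s) = Real.exp (lam * t) * Real.exp (-(lam * (t - s))) := by
      rw [← Real.exp_add]; ring_nf
    rw [this]; ring
  rw [hsub, intervalIntegral.integral_const_mul, intervalIntegral.integral_const_mul, mul_comm]
  refine mul_le_mul_of_nonneg_right (le_trans ?_ hlam) (Real.exp_pos _).le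
  refine mul_le_mul_of_nonneg_left ?_ hα.le
  rw [← Real.integral_rpow_mul_exp_neg_mul_Ioi hα hlam0, intervalIntegral.integral_of_le ht.le]
  refine setIntegral_mono_set ?_ ?_ ?_
  · have := Real.integral_rpow_mul_exp_neg_mul_Ioi hα hlam0
    by_contra hcon
    -- a non-integrable function would have Bochner integral `0`, but the value is positive
    have h0 : ∫ t in Ioi (0 : ℝ), t ^ (α - 1) * Real.exp (-(lam * t)) = 0 :=
      integral_undef hcon
    have : 0 < (1 / lam) ^ α * Real.Gamma α := by
      have := Real.Gamma_pos_of_pos hα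
      positivity
    linarith
  · filter_upwards [ae_restrict_mem measurableSet_Ioi] with u hu
    exact mul_nonneg (Real.rpow_nonneg (le_of_lt hu) _) (Real.exp_pos _).le
  · exact Ioc_subset_Ioi_self.eventuallyLE

/-- A bounded nonnegative solution of the homogeneous Volterra inequality vanishes: in the
exponentially weighted sup norm of `exists_laplace_ker_le` the operator halves norms. -/
lemma volterra_eq_zero {α : ℝ} (hα : 0 < α) {d : ℝ → ℝ} (hd : Measurable d)
    (h0 : ∀ t, 0 ≤ d t) (h1 : ∀ t, d t ≤ 1)
    (hle : ∀ t, 0 < t → d t ≤ ∫ s in (0 : ℝ)..t, d s * abelKer α t s) {t : ℝ} (ht : 0 < t) :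
    d t = 0 := by
  obtain ⟨lam, hlam0, hlam⟩ := exists_laplace_ker_le hα
  have key : ∀ j : ℕ, ∀ t, 0 < t → d t ≤ (1 / 2) ^ j * Real.exp (lam * t) := by
    intro j
    induction j with
    | zero =>
      intro t ht
      simpa using (h1 t).trans (Real.one_le_exp (by positivity))
    | succ j ih =>
      intro t ht
      calc d t ≤ ∫ s in (0 : ℝ)..t, d s * abelKer α t s := hle t ht
        _ ≤ ∫ s in (0 : ℝ)..t, (1 / 2) ^ j * (Real.exp (lam * s) * abelKer α t s) := by
          refine intervalIntegral.integral_mono_on_of_le_Ioo ht.le ?_ ?_ ?_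
          · exact mul_abelKer_intervalIntegrable hα hd
              (fun s => abs_le.2 ⟨by linarith [h0 s], h1 s⟩) t 0 t
          · exact ((abelKer_intervalIntegrable hα t 0 t).continuousOn_mul
              (by fun_prop)).const_mul _
          · intro s hs
            rw [← mul_assoc]
            exact mul_le_mul_of_nonneg_right (ih s hs.1) (abelKer_nonneg hα hs.2.le)
        _ ≤ (1 / 2) ^ j * ((1 / 2) * Real.exp (lam * t)) := by
          rw [intervalIntegral.integral_const_mul]
          exact mul_le_mul_of_nonneg_left (hlam t ht) (by positivity)
        _ = (1 / 2) ^ (j + 1) * Real.exp (lam * t) := by ring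
  refine le_antisymm ?_ (h0 t)
  have hl : Tendsto (fun j : ℕ => (1 / 2 : ℝ) ^ j * Real.exp (lam * t)) atTop (𝓝 0) := by
    simpa using (tendsto_pow_atTop_nhds_zero_of_lt_one (by norm_num : (0 : ℝ) ≤ 1 / 2)
      (by norm_num)).mul_const (Real.exp (lam * t))
  exact ge_of_tendsto' hl fun j => key j t ht

/-- The transform `f ↦ ∫₀ᵗ (1 - f(s)) α (t - s) ^ (α - 1) ds`, which sends a limiting return-time
distribution function to the corresponding hitting-time one. -/
def hitTr (α : ℝ) (f : ℝ → ℝ) (t : ℝ) : ℝ := ∫ s in (0 : ℝ)..t, (1 - f s) * abelKer α t s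

lemma one_sub_mul_abelKer_intervalIntegrable {α : ℝ} (hα : 0 < α) {f : ℝ → ℝ} (hf : Measurable f)
    (h01 : ∀ s, f s ∈ Icc (0 : ℝ) 1) (t a b : ℝ) :
    IntervalIntegrable (fun s => (1 - f s) * abelKer α t s) volume a b :=
  mul_abelKer_intervalIntegrable hα (f := fun s => 1 - f s) (measurable_const.sub hf) (C := 1)
    (fun s => abs_le.2 ⟨by linarith [(h01 s).2], by linarith [(h01 s).1]⟩) t a b

lemma hitTr_anti {α : ℝ} (hα : 0 < α) {f g : ℝ → ℝ} (hf : Measurable f) (hg : Measurable g)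
    (hf1 : ∀ s, f s ∈ Icc (0 : ℝ) 1) (hg1 : ∀ s, g s ∈ Icc (0 : ℝ) 1)
    (hfg : ∀ s, f s ≤ g s) {t : ℝ} (ht : 0 ≤ t) : hitTr α g t ≤ hitTr α f t := by
  refine intervalIntegral.integral_mono_on ht
    (one_sub_mul_abelKer_intervalIntegrable hα hg hg1 t 0 t)
    (one_sub_mul_abelKer_intervalIntegrable hα hf hf1 t 0 t) fun s hs => ?_
  exact mul_le_mul_of_nonneg_right (by linarith [hfg s]) (abelKer_nonneg hα hs.2)

/-- One-sided Hölder bound, uniform in `f`; it uses that the kernel decreases in `t`. -/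
lemma hitTr_le_add {α : ℝ} (hα : α ∈ Ioc (0 : ℝ) 1) {f : ℝ → ℝ} (hf : Measurable f)
    (h01 : ∀ s, f s ∈ Icc (0 : ℝ) 1) {t u : ℝ} (ht : 0 ≤ t) (htu : t ≤ u) :
    hitTr α f u ≤ hitTr α f t + (u - t) ^ α := by
  have hii := one_sub_mul_abelKer_intervalIntegrable hα.1 hf h01
  unfold hitTr
  rw [← intervalIntegral.integral_add_adjacent_intervals (hii u 0 t) (hii u t u)]
  refine add_le_add ?_ ?_
  · refine intervalIntegral.integral_mono_on_of_le_Ioo ht (hii u 0 t) (hii t 0 t) fun s hs => ?_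
    refine mul_le_mul_of_nonneg_left ?_ (by linarith [(h01 s).2])
    exact mul_le_mul_of_nonneg_left (Real.rpow_le_rpow_of_nonpos (by linarith [hs.2])
      (by linarith) (by linarith [hα.2])) hα.1.le
  · have h := integral_abelKer hα.1 u t u
    rw [sub_self, Real.zero_rpow hα.1.ne', sub_zero] at h
    rw [← h]
    refine intervalIntegral.integral_mono_on htu (hii u t u)
      (abelKer_intervalIntegrable hα.1 u t u) fun s hs => ?_
    exact mul_le_of_le_one_left (abelKer_nonneg hα.1 hs.2) (by linarith [(h01 s).1])

lemma tendsto_hitTr {α : ℝ} (hα : 0 < α) {f : ℕ → ℝ → ℝ} {g : ℝ → ℝ}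
    (hf : ∀ n, Measurable (f n)) (h01 : ∀ n s, f n s ∈ Icc (0 : ℝ) 1)
    (hlim : ∀ s, Tendsto (fun n => f n s) atTop (𝓝 (g s))) (t : ℝ) :
    Tendsto (fun n => hitTr α (f n) t) atTop (𝓝 (hitTr α g t)) := by
  refine intervalIntegral.tendsto_integral_filter_of_dominated_convergence
    (fun s => |abelKer α t s|) ?_ ?_ (abelKer_intervalIntegrable hα t 0 t).abs ?_
  · exact Eventually.of_forall fun n =>
      ((measurable_const.sub (hf n)).mul (measurable_abelKer α t)).aestronglyMeasurable
  · refine Eventually.of_forall fun n => Eventually.of_forall fun s _ => ?_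
    rw [norm_mul, Real.norm_eq_abs, Real.norm_eq_abs]
    refine mul_le_of_le_one_left (abs_nonneg _) (abs_le.2 ⟨?_, ?_⟩) <;>
      linarith [(h01 n s).1, (h01 n s).2]
  · exact Eventually.of_forall fun s _ => ((hlim s).const_sub 1).mul_const _

/-- If `R k` is asymptotically close to its own transform at every `t > 0`, then `R k` converges:
its upper and lower limits `L`, `l` satisfy `L ≤ hitTr l` and `hitTr L ≤ l` (Fatou), so `L - l`
solves the homogeneous Volterra inequality. -/
lemma exists_limit_of_sub_hitTr {α : ℝ} (hα : 0 < α) {R : ℕ → ℝ → ℝ}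
    (hmono : ∀ k, Monotone (R k)) (h01 : ∀ k s, R k s ∈ Icc (0 : ℝ) 1)
    (hR0 : ∀ k, R k 0 = 0)
    (hlim : ∀ t, 0 < t → Tendsto (fun k => R k t - hitTr α (R k) t) atTop (𝓝 0)) :
    ∃ F : ℝ → ℝ, Monotone F ∧ (∀ t, F t ∈ Icc (0 : ℝ) 1) ∧
      (∀ t, 0 ≤ t → F t = hitTr α F t) ∧
      ∀ t, 0 ≤ t → Tendsto (fun k => R k t) atTop (𝓝 (F t)) := by
  have bb : ∀ n t, BddBelow (range fun k => R (n + k) t) := fun n t =>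
    ⟨0, by rintro _ ⟨k, rfl⟩; exact (h01 _ _).1⟩
  have ba : ∀ n t, BddAbove (range fun k => R (n + k) t) := fun n t =>
    ⟨1, by rintro _ ⟨k, rfl⟩; exact (h01 _ _).2⟩
  set I : ℕ → ℝ → ℝ := fun n t => ⨅ k, R (n + k) t with hI
  set S : ℕ → ℝ → ℝ := fun n t => ⨆ k, R (n + k) t with hS
  have I_le : ∀ n k t, n ≤ k → I n t ≤ R k t := fun n k t hnk => by
    have := ciInf_le (bb n t) (k - n)
    rwa [Nat.add_sub_cancel' hnk] at this
  have le_S : ∀ n k t, n ≤ k → R k t ≤ S n t := fun n k t hnk => by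
    have := le_ciSup (ba n t) (k - n)
    rwa [Nat.add_sub_cancel' hnk] at this
  have I01 : ∀ n s, I n s ∈ Icc (0 : ℝ) 1 := fun n s =>
    ⟨le_ciInf fun k => (h01 _ _).1, (I_le n n s le_rfl).trans (h01 _ _).2⟩
  have S01 : ∀ n s, S n s ∈ Icc (0 : ℝ) 1 := fun n s =>
    ⟨(h01 n s).1.trans (le_S n n s le_rfl), ciSup_le fun k => (h01 _ _).2⟩
  have Imono : ∀ n, Monotone (I n) := fun n s t hst => ciInf_mono (bb n s) fun k => hmono _ hst
  have Smono : ∀ n, Monotone (S n) := fun n s t hst => ciSup_mono (ba n t) fun k => hmono _ hst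
  have Iup : ∀ t, Monotone fun n => I n t := fun t n m hnm =>
    le_ciInf fun k => I_le n (m + k) t (by omega)
  have Sdown : ∀ t, Antitone fun n => S n t := fun t n m hnm =>
    ciSup_le fun k => le_S n (m + k) t (by omega)
  set l : ℝ → ℝ := fun t => ⨆ n, I n t with hl
  set L : ℝ → ℝ := fun t => ⨅ n, S n t with hL
  have bI : ∀ t, BddAbove (range fun n => I n t) := fun t =>
    ⟨1, by rintro _ ⟨k, rfl⟩; exact (I01 _ _).2⟩
  have bS : ∀ t, BddBelow (range fun n => S n t) := fun t =>
    ⟨0, by rintro _ ⟨k, rfl⟩; exact (S01 _ _).1⟩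
  have Ilim : ∀ t, Tendsto (fun n => I n t) atTop (𝓝 (l t)) := fun t =>
    tendsto_atTop_ciSup (Iup t) (bI t)
  have Slim : ∀ t, Tendsto (fun n => S n t) atTop (𝓝 (L t)) := fun t =>
    tendsto_atTop_ciInf (Sdown t) (bS t)
  have lL : ∀ t, l t ≤ L t := fun t => le_of_tendsto_of_tendsto' (Ilim t) (Slim t)
    fun n => (I_le n n t le_rfl).trans (le_S n n t le_rfl)
  have l01 : ∀ t, l t ∈ Icc (0 : ℝ) 1 := fun t =>
    isClosed_Icc.mem_of_tendsto (Ilim t) (Eventually.of_forall fun n => I01 n t)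
  have L01 : ∀ t, L t ∈ Icc (0 : ℝ) 1 := fun t =>
    isClosed_Icc.mem_of_tendsto (Slim t) (Eventually.of_forall fun n => S01 n t)
  have lmono : Monotone l := fun s t hst => ciSup_mono (bI t) fun n => Imono n hst
  have Lmono : Monotone L := fun s t hst => ciInf_mono (bS s) fun n => Smono n hst
  have hup : ∀ t, 0 < t → L t ≤ hitTr α l t := by
    intro t ht
    refine le_of_forall_pos_le_add fun ε hε => ?_
    have hJ := (tendsto_hitTr hα (fun n => (Imono n).measurable) I01 Ilim t).add_const ε
    refine le_of_tendsto_of_tendsto (Slim t) hJ ?_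
    obtain ⟨N, hN⟩ := eventually_atTop.1 ((hlim t ht).eventually (Iic_mem_nhds hε))
    filter_upwards [eventually_ge_atTop N] with n hn
    refine ciSup_le fun k => ?_
    have h1 : R (n + k) t - hitTr α (R (n + k)) t ≤ ε := hN (n + k) (by omega)
    have h2 := hitTr_anti hα (Imono n).measurable (hmono (n + k)).measurable (I01 n)
      (h01 (n + k)) (fun s => I_le n (n + k) s (by omega)) ht.le
    linarith
  have hdown : ∀ t, 0 < t → hitTr α L t ≤ l t := by
    intro t ht
    refine le_of_forall_pos_le_add fun ε hε => ?_
    have hJ := tendsto_hitTr hα (fun n => (Smono n).measurable) S01 Slim t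
    refine le_of_tendsto_of_tendsto hJ ((Ilim t).add_const ε) ?_
    obtain ⟨N, hN⟩ := eventually_atTop.1
      ((hlim t ht).eventually (Ici_mem_nhds (show -ε < 0 by linarith)))
    filter_upwards [eventually_ge_atTop N] with n hn
    rw [← sub_le_iff_le_add]
    refine le_ciInf fun k => ?_
    have h1 : -ε ≤ R (n + k) t - hitTr α (R (n + k)) t := hN (n + k) (by omega)
    have h2 := hitTr_anti hα (hmono (n + k)).measurable (Smono n).measurable
      (h01 (n + k)) (S01 n) (fun s => le_S n (n + k) s (by omega)) ht.le
    linarith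
  have hdz : ∀ t, 0 < t → L t - l t = 0 := fun t ht =>
    volterra_eq_zero hα (d := fun t => L t - l t) (Lmono.measurable.sub lmono.measurable)
      (fun t => sub_nonneg.2 (lL t)) (fun t => by linarith [(L01 t).2, (l01 t).1])
      (fun t ht => by
        have h1 := hup t ht
        have h2 := hdown t ht
        have h3 : hitTr α l t - hitTr α L t = ∫ s in (0 : ℝ)..t, (L s - l s) * abelKer α t s := by
          unfold hitTr
          rw [← intervalIntegral.integral_sub
            (one_sub_mul_abelKer_intervalIntegrable hα lmono.measurable l01 t 0 t)
            (one_sub_mul_abelKer_intervalIntegrable hα Lmono.measurable L01 t 0 t)]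
          congr 1; ext s; ring
        linarith) ht
  have hL0 : L 0 = 0 := by
    simp [hL, hS, hR0]
  have hl0 : l 0 = 0 := by
    simp [hl, hI, hR0]
  have heq : ∀ t, 0 ≤ t → L t = l t := fun t ht => by
    rcases ht.eq_or_lt with rfl | ht
    · rw [hL0, hl0]
    · linarith [hdz t ht]
  refine ⟨L, Lmono, L01, fun t ht => ?_, fun t ht => ?_⟩
  · rcases ht.eq_or_lt with rfl | ht
    · simp [hL0, hitTr]
    · have h4 : hitTr α l t = hitTr α L t := by
        unfold hitTr
        refine intervalIntegral.integral_congr fun s hs => ?_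
        rw [uIcc_of_le ht.le] at hs
        simp only [heq s hs.1]
      have h1 := hup t ht
      have h2 := hdown t ht
      have h3 := heq t ht.le
      linarith
  · refine tendsto_of_tendsto_of_tendsto_of_le_of_le (heq t ht ▸ Ilim t) (Slim t)
      (fun n => I_le n n t le_rfl) (fun n => le_S n n t le_rfl)

/-- Asymptotic equality of `R k` with `G k` on a dense set, together with `G k ≈ hitTr (R k)`,
upgrades to `R k ≈ hitTr (R k)` everywhere, by monotonicity and the Hölder bound. -/
lemma sub_hitTr_tendsto_of_dense {α : ℝ} (hα : α ∈ Ioc (0 : ℝ) 1) {R G : ℕ → ℝ → ℝ}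
    (hmono : ∀ k, Monotone (R k)) (h01 : ∀ k s, R k s ∈ Icc (0 : ℝ) 1)
    (hG : ∀ t, 0 < t → Tendsto (fun k => G k t - hitTr α (R k) t) atTop (𝓝 0))
    {D : Set ℝ} (hD0 : D ⊆ Ioi 0) (hD : Ioi (0 : ℝ) ⊆ closure D)
    (hDlim : ∀ t ∈ D, Tendsto (fun k => R k t - G k t) atTop (𝓝 0)) {t : ℝ} (ht : 0 < t) :
    Tendsto (fun k => R k t - hitTr α (R k) t) atTop (𝓝 0) := by
  have hDl : ∀ s ∈ D, Tendsto (fun k => R k s - hitTr α (R k) s) atTop (𝓝 0) := fun s hs => by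
    simpa using (hDlim s hs).add (hG s (hD0 hs))
  rw [Metric.tendsto_nhds]
  intro ε hε
  obtain ⟨δ, hδ, hδε⟩ : ∃ δ : ℝ, 0 < δ ∧ δ ^ α ≤ ε / 3 := by
    refine ⟨(ε / 3) ^ α⁻¹, by positivity, ?_⟩
    rw [← Real.rpow_mul (by positivity), inv_mul_cancel₀ hα.1.ne', Real.rpow_one]
  have find : ∀ a b : ℝ, 0 ≤ a → a < b → ∃ s ∈ D, a < s ∧ s < b := by
    intro a b ha hab
    have hm : (a + b) / 2 ∈ closure D := hD (show 0 < (a + b) / 2 by linarith)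
    obtain ⟨s, hs, hsD⟩ := mem_closure_iff.1 hm (Ioo a b) isOpen_Ioo
      ⟨by linarith, by linarith⟩
    exact ⟨s, hsD, hs.1, hs.2⟩
  obtain ⟨u, huD, htu, hut⟩ := find t (t + δ) ht.le (by linarith)
  obtain ⟨s, hsD, hs1, hst⟩ := find (max 0 (t - δ)) t (le_max_left _ _)
    (max_lt ht (by linarith))
  have hs0 : 0 < s := hD0 hsD
  have hsδ : t - δ < s := (le_max_right _ _).trans_lt hs1
  filter_upwards [(hDl u huD).eventually (Iic_mem_nhds (show (0 : ℝ) < ε / 3 by positivity)),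
    (hDl s hsD).eventually (Ici_mem_nhds (show -(ε / 3) < 0 by linarith))] with k h1 h2
  change R k u - hitTr α (R k) u ≤ ε / 3 at h1
  change -(ε / 3) ≤ R k s - hitTr α (R k) s at h2
  have h3 := hitTr_le_add hα (hmono k).measurable (h01 k) ht.le htu.le
  have h4 := hitTr_le_add hα (hmono k).measurable (h01 k) hs0.le hst.le
  have h5 : (u - t) ^ α ≤ ε / 3 :=
    (Real.rpow_le_rpow (by linarith) (by linarith) hα.1.le).trans hδε
  have h6 : (t - s) ^ α ≤ ε / 3 :=
    (Real.rpow_le_rpow (by linarith) (by linarith) hα.1.le).trans hδε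
  have h7 := hmono k htu.le
  have h8 := hmono k hst.le
  rw [Real.dist_eq, sub_zero, abs_lt]
  constructor <;> linarith

/-! ### Consequences of regular variation and of the Darling–Kac property -/

lemma abs_rpow_sub_rpow_le {α x y : ℝ} (hα : α ∈ Ioc (0 : ℝ) 1) (hx : 0 ≤ x) (hy : 0 ≤ y) :
    |x ^ α - y ^ α| ≤ |x - y| ^ α := by
  wlog h : y ≤ x generalizing x y
  · rw [abs_sub_comm, abs_sub_comm x]
    exact this hy hx (le_of_not_ge h)
  have h1 := Real.rpow_add_le_add_rpow hy (sub_nonneg.2 h) hα.1.le hα.2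
  rw [add_sub_cancel] at h1
  rw [abs_of_nonneg (sub_nonneg.2 h),
    abs_of_nonneg (sub_nonneg.2 (Real.rpow_le_rpow hy h hα.1.le))]
  linarith

lemma IsScalingFunction.mono {a : ℝ → ℝ} (ha : IsScalingFunction a) {x y : ℝ} (hx : 0 ≤ x)
    (hxy : x ≤ y) : a x ≤ a y :=
  ha.2.1.monotoneOn hx (hx.trans hxy) hxy

lemma IsScalingFunction.pos {a : ℝ → ℝ} (ha : IsScalingFunction a) {x : ℝ} (hx : 0 < x) :
    0 < a x := by
  have := ha.2.1 (show (0 : ℝ) ∈ Ici 0 from self_mem_Ici) hx.le hx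
  rwa [ha.1] at this

lemma IsScalingFunction.tendsto {a : ℝ → ℝ} (ha : IsScalingFunction a) :
    Tendsto a atTop atTop := by
  rw [tendsto_atTop]
  intro c
  obtain ⟨x, hx, hxc⟩ := ha.2.2.2.2 (max c 0) (le_max_right _ _)
  filter_upwards [eventually_ge_atTop x] with y hy
  exact (le_max_left c 0).trans (hxc ▸ ha.mono hx hy)

/-- Regular variation of a monotone function is uniform on `[0, U]` (the limit `u ^ α` is
continuous, so a finite grid suffices). -/
lemma regVary_uniform {a : ℝ → ℝ} (ha : IsScalingFunction a) {α : ℝ} (hα : α ∈ Ioc (0 : ℝ) 1)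
    (hreg : RegVary a α) {U ε : ℝ} (hε : 0 < ε) :
    ∀ᶠ y in atTop, ∀ u ∈ Icc (0 : ℝ) U, |a (y * u) / a y - u ^ α| ≤ ε := by
  obtain ⟨δ, hδ, hδε⟩ : ∃ δ : ℝ, 0 < δ ∧ δ ^ α ≤ ε / 2 := by
    refine ⟨(ε / 2) ^ α⁻¹, by positivity, ?_⟩
    rw [← Real.rpow_mul (by positivity), inv_mul_cancel₀ hα.1.ne', Real.rpow_one]
  have hgrid : ∀ i ∈ Finset.range (⌊U / δ⌋₊ + 2),
      ∀ᶠ y in atTop, |a (y * (δ * i)) / a y - (δ * i : ℝ) ^ α| ≤ ε / 2 := by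
    intro i _
    rcases Nat.eq_zero_or_pos i with rfl | hi
    · refine Eventually.of_forall fun y => ?_
      simp [ha.1, Real.zero_rpow hα.1.ne']
      positivity
    · have h := hreg (δ * i) (by positivity)
      filter_upwards [h.eventually (Metric.closedBall_mem_nhds _ (half_pos hε))] with y hy
      rw [Real.dist_eq] at hy
      rwa [mul_comm y]
  filter_upwards [(Finset.eventually_all _).2 hgrid, eventually_gt_atTop 0] with y hy hy0 u hu
  have hay := ha.pos hy0
  set i := ⌊u / δ⌋₊ with hi
  have hiu : δ * i ≤ u := by
    have := Nat.floor_le (div_nonneg hu.1 hδ.le)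
    rw [le_div_iff₀ hδ] at this
    linarith
  have hui : u ≤ δ * ((i + 1 : ℕ) : ℝ) := by
    have := (Nat.lt_floor_add_one (u / δ)).le
    rw [div_le_iff₀ hδ] at this
    push_cast
    linarith
  have hiU : i ≤ ⌊U / δ⌋₊ := Nat.floor_mono (by gcongr; exact hu.2)
  have h1 := abs_le.1 (hy i (Finset.mem_range.2 (by omega)))
  have h2 := abs_le.1 (hy (i + 1) (Finset.mem_range.2 (by omega)))
  have hδi : 0 ≤ δ * (i : ℝ) := by positivity
  have m1 : a (y * (δ * i)) / a y ≤ a (y * u) / a y :=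
    div_le_div_of_nonneg_right (ha.mono (by positivity)
      (mul_le_mul_of_nonneg_left hiu hy0.le)) hay.le
  have m2 : a (y * u) / a y ≤ a (y * (δ * ((i + 1 : ℕ) : ℝ))) / a y :=
    div_le_div_of_nonneg_right (ha.mono (mul_nonneg hy0.le hu.1)
      (mul_le_mul_of_nonneg_left hui hy0.le)) hay.le
  have e1 : u ^ α ≤ (δ * i) ^ α + ε / 2 := by
    have h3 := Real.rpow_add_le_add_rpow hδi hδ.le hα.1.le hα.2
    have h4 : u ^ α ≤ (δ * i + δ) ^ α :=
      Real.rpow_le_rpow hu.1 (by push_cast at hui; linarith) hα.1.le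
    linarith
  have e2 : (δ * ((i + 1 : ℕ) : ℝ)) ^ α ≤ u ^ α + ε / 2 := by
    have h3 := Real.rpow_add_le_add_rpow hu.1 hδ.le hα.1.le hα.2
    have h4 : (δ * ((i + 1 : ℕ) : ℝ)) ^ α ≤ (u + δ) ^ α :=
      Real.rpow_le_rpow (by positivity) (by push_cast; linarith) hα.1.le
    linarith
  rw [abs_le]
  constructor <;> linarith [h1.1, h2.2]

/-- The Darling–Kac approximation of partial sums, uniform over all `q ≤ U y` with an error
relative to `a y`; for the finitely many small `q` monotonicity in `q` gives the bound. -/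
lemma dk_uniform {X : Type*} [MeasurableSpace X] {μ : Measure X} {T : X → X} {Y : Set X}
    {a : ℝ → ℝ} (ha : IsScalingFunction a) {α : ℝ}
    (hreg : RegVary a α) (hDK : IsDKSet T μ Y a) {U ε : ℝ} (hU : 0 < U) (hε : 0 < ε) :
    ∀ᶠ y in atTop, ∀ᵐ x ∂μ.restrict Y, ∀ q : ℕ, (q : ℝ) ≤ U * y →
      |(∑ k ∈ Finset.range q, (dkDens T μ Y k x).toReal) / (μ Y).toReal - a q| ≤ ε * a y := by
  obtain ⟨-, -, -, hdk⟩ := hDK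
  have hUα : 0 < U ^ α + 1 := by positivity
  obtain ⟨N₀, hN₀⟩ := hdk (ε / (U ^ α + 1)) (by positivity)
  set N := N₀ + 1 with hN
  have hae : ∀ᵐ x ∂μ.restrict Y, ∀ n ≥ N,
      |(∑ k ∈ Finset.range n, (dkDens T μ Y k x).toReal) / (μ Y).toReal / a n - 1|
        ≤ ε / (U ^ α + 1) := by
    rw [ae_all_iff]; intro n
    by_cases hn : n ≥ N
    · filter_upwards [hN₀ n (by omega)] with x hx _ using hx
    · exact Eventually.of_forall fun x h => absurd h hn
  have hbig : ∀ᶠ y in atTop, (1 + ε / (U ^ α + 1)) * a N ≤ ε * a y := by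
    have := ha.tendsto.const_mul_atTop hε
    exact this.eventually (eventually_ge_atTop _)
  have hrv := (hreg U hU).eventually (Iic_mem_nhds (show U ^ α < U ^ α + 1 by linarith))
  filter_upwards [hbig, hrv, eventually_gt_atTop 0] with y hy1 hy2 hy0
  have hay := ha.pos hy0
  change a (U * y) / a y ≤ U ^ α + 1 at hy2
  rw [div_le_iff₀ hay] at hy2
  filter_upwards [hae] with x hx q hq
  have hmul : ∀ n ≥ N, |(∑ k ∈ Finset.range n, (dkDens T μ Y k x).toReal) / (μ Y).toReal - a n|
        ≤ ε / (U ^ α + 1) * a n := by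
    intro n hn
    have han : 0 < a n := ha.pos (by
      have : 0 < n := by omega
      exact_mod_cast this)
    have h := mul_le_mul_of_nonneg_right (hx n hn) han.le
    rw [← abs_of_pos han, ← abs_mul, abs_of_pos han, sub_mul, one_mul,
      div_mul_cancel₀ _ han.ne'] at h
    exact h
  by_cases hqN : N ≤ q
  · refine (hmul q hqN).trans ?_
    have : a q ≤ a (U * y) := ha.mono (Nat.cast_nonneg q) hq
    rw [div_mul_eq_mul_div, div_le_iff₀ hUα]
    calc ε * a q ≤ ε * ((U ^ α + 1) * a y) :=
          mul_le_mul_of_nonneg_left (this.trans hy2) hε.le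
      _ = ε * a y * (U ^ α + 1) := by ring
  · push Not at hqN
    have h1 := (abs_le.1 (hmul N le_rfl)).2
    have h2 : (∑ k ∈ Finset.range q, (dkDens T μ Y k x).toReal) / (μ Y).toReal
        ≤ (∑ k ∈ Finset.range N, (dkDens T μ Y k x).toReal) / (μ Y).toReal := by
      refine div_le_div_of_nonneg_right ?_ ENNReal.toReal_nonneg
      exact Finset.sum_le_sum_of_subset_of_nonneg (Finset.range_mono hqN.le)
        fun _ _ _ => ENNReal.toReal_nonneg
    have h3 : 0 ≤ (∑ k ∈ Finset.range q, (dkDens T μ Y k x).toReal) / (μ Y).toReal :=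
      div_nonneg (Finset.sum_nonneg fun _ _ => ENNReal.toReal_nonneg) ENNReal.toReal_nonneg
    have h4 : a q ≤ a N := ha.mono (Nat.cast_nonneg q) (by exact_mod_cast hqN.le)
    have h5 : 0 ≤ a q := ha.2.2.2.1 _ (Nat.cast_nonneg q)
    have h6 : 0 ≤ ε / (U ^ α + 1) := by positivity
    rw [abs_le]
    constructor <;> nlinarith

/-! ### Hitting times -/

/-- The points whose orbit visits `E` at some time in `{1, …, n}`. -/
def hitSet {X : Type*} (T : X → X) (E : Set X) (n : ℕ) : Set X :=
  {x | ∃ j, 0 < j ∧ j ≤ n ∧ T^[j] x ∈ E}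

lemma hitSet_mono {X : Type*} (T : X → X) (E : Set X) {m n : ℕ} (h : m ≤ n) :
    hitSet T E m ⊆ hitSet T E n :=
  fun _ ⟨j, h0, hj, hE⟩ => ⟨j, h0, hj.trans h, hE⟩

lemma measurableSet_hitSet {X : Type*} [MeasurableSpace X] {T : X → X} (hT : Measurable T)
    {E : Set X} (hE : MeasurableSet E) (n : ℕ) : MeasurableSet (hitSet T E n) := by
  have : hitSet T E n = ⋃ j ∈ {j : ℕ | 0 < j ∧ j ≤ n}, (T^[j]) ⁻¹' E := by
    ext x; simp [hitSet, and_assoc]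
  rw [this]
  exact MeasurableSet.biUnion (to_countable _) fun j _ => hT.iterate j hE

lemma phiRT_le {X : Type*} {T : X → X} {E : Set X} {x : X} {j : ℕ} (h0 : 0 < j)
    (hj : T^[j] x ∈ E) : phiRT T E x ≤ j :=
  iInf₂_le (f := fun (n : ℕ) (_ : n ∈ {n : ℕ | 0 < n ∧ T^[n] x ∈ E}) => (n : ℝ≥0∞)) j ⟨h0, hj⟩

lemma le_phiRT {X : Type*} {T : X → X} {E : Set X} {x : X} {n : ℕ} (h : x ∉ hitSet T E n) :
    ((n + 1 : ℕ) : ℝ≥0∞) ≤ phiRT T E x := by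
  refine le_iInf₂ fun j hj => ?_
  have : n + 1 ≤ j := by
    by_contra hlt
    exact h ⟨j, hj.1, by omega, hj.2⟩
  exact_mod_cast this

lemma measurable_phiRT {X : Type*} [MeasurableSpace X] {T : X → X} (hT : Measurable T)
    {E : Set X} (hE : MeasurableSet E) : Measurable (phiRT T E) := by
  classical
  have : phiRT T E = fun x => ⨅ n : ℕ, if 0 < n ∧ T^[n] x ∈ E then (n : ℝ≥0∞) else ⊤ := by
    ext x
    simp only [phiRT, iInf_eq_if, mem_ofPred_eq]
  rw [this]
  refine Measurable.iInf fun n => Measurable.ite ?_ measurable_const measurable_const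
  exact (MeasurableSet.const (0 < n)).inter (hT.iterate n hE)

lemma phiRT_level {X : Type*} {T : X → X} {E : Set X} {x : X} {g t : ℝ} (hg : 0 < g)
    (ht : 0 ≤ t) :
    ENNReal.ofReal g * phiRT T E x ≤ ENNReal.ofReal t ↔ x ∈ hitSet T E ⌊t / g⌋₊ := by
  constructor
  · intro h
    by_contra hx
    have h1 := mul_le_mul_right (le_phiRT hx) (ENNReal.ofReal g)
    have h2 := h1.trans h
    rw [← ENNReal.ofReal_natCast, ← ENNReal.ofReal_mul hg.le,
      ENNReal.ofReal_le_ofReal_iff ht] at h2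
    have h3 := Nat.lt_floor_add_one (t / g)
    rw [div_lt_iff₀ hg] at h3
    push_cast at h2
    linarith
  · rintro ⟨j, h0, hj, hE⟩
    refine (mul_le_mul_right (phiRT_le h0 hE) _).trans ?_
    rw [← ENNReal.ofReal_natCast, ← ENNReal.ofReal_mul hg.le]
    refine ENNReal.ofReal_le_ofReal ?_
    have := (Nat.le_floor_iff (by positivity)).1 hj
    rw [le_div_iff₀ hg] at this
    linarith

/-- The truncated normalized hitting time `min (g φ_E) t`. -/
def truncTime {X : Type*} (T : X → X) (E : Set X) (g t : ℝ) (x : X) : ℝ :=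
  (min (ENNReal.ofReal g * phiRT T E x) (ENNReal.ofReal t)).toReal

lemma measurable_truncTime {X : Type*} [MeasurableSpace X] {T : X → X} (hT : Measurable T)
    {E : Set X} (hE : MeasurableSet E) (g t : ℝ) : Measurable (truncTime T E g t) :=
  (((measurable_phiRT hT hE).const_mul _).min measurable_const).ennreal_toReal

lemma truncTime_nonneg {X : Type*} (T : X → X) (E : Set X) (g t : ℝ) (x : X) :
    0 ≤ truncTime T E g t x := ENNReal.toReal_nonneg

lemma truncTime_le {X : Type*} (T : X → X) (E : Set X) (g : ℝ) {t : ℝ} (ht : 0 ≤ t) (x : X) :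
    truncTime T E g t x ≤ t :=
  ENNReal.toReal_le_of_le_ofReal ht (min_le_right _ _)

lemma lt_truncTime_iff {X : Type*} {T : X → X} {E : Set X} {x : X} {g s t : ℝ} (hs : 0 ≤ s)
    (hst : s < t) :
    s < truncTime T E g t x ↔ ¬ ENNReal.ofReal g * phiRT T E x ≤ ENNReal.ofReal s := by
  have hfin : min (ENNReal.ofReal g * phiRT T E x) (ENNReal.ofReal t) ≠ ⊤ :=
    ((min_le_right _ _).trans_lt ENNReal.ofReal_lt_top).ne
  rw [truncTime, ← ENNReal.ofReal_lt_iff_lt_toReal hs hfin, lt_min_iff, not_le]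
  exact and_iff_left ((ENNReal.ofReal_lt_ofReal_iff (hs.trans_lt hst)).2 hst)

/-- With `n = ⌊t / g⌋` and `τ = min (φ_E, n)`, membership in `hitSet i` for `i < n` is decided by
`τ`, and `(n - τ + 1) g` approximates `t - min (g φ_E) t`. -/
lemma exists_tau {X : Type*} (T : X → X) (E : Set X) (x : X) {g t : ℝ} (hg : 0 < g)
    (ht : 0 ≤ t) :
    ∃ τ : ℕ, τ ≤ ⌊t / g⌋₊ ∧ (∀ i < ⌊t / g⌋₊, x ∉ hitSet T E i ↔ i < τ) ∧
      |((⌊t / g⌋₊ - τ + 1 : ℕ) : ℝ) * g - (t - truncTime T E g t x)| ≤ g := by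
  classical
  set n := ⌊t / g⌋₊ with hn
  have hn1 : n * g ≤ t := by
    have := Nat.floor_le (div_nonneg ht hg.le)
    rwa [le_div_iff₀ hg] at this
  have hn2 : t < (n + 1) * g := by
    have := Nat.lt_floor_add_one (t / g)
    rwa [div_lt_iff₀ hg] at this
  by_cases hx : x ∈ hitSet T E n
  · have hex : ∃ j, 0 < j ∧ T^[j] x ∈ E := by
      obtain ⟨j, h0, -, hE⟩ := hx
      exact ⟨j, h0, hE⟩
    obtain ⟨h0, hE⟩ := Nat.find_spec hex
    have hmin : ∀ j, 0 < j → T^[j] x ∈ E → Nat.find hex ≤ j := fun j hj hjE =>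
      Nat.find_min' hex ⟨hj, hjE⟩
    set τ := Nat.find hex with hτ
    have hτn : τ ≤ n := by
      obtain ⟨j, h0, hj, hE⟩ := hx
      exact (hmin j h0 hE).trans hj
    have hphi : phiRT T E x = τ := by
      refine le_antisymm (phiRT_le h0 hE) (le_iInf₂ fun j hj => ?_)
      exact_mod_cast hmin j hj.1 hj.2
    have hτt : g * τ ≤ t := by
      have : (τ : ℝ) ≤ n := by exact_mod_cast hτn
      nlinarith
    have hS : truncTime T E g t x = g * τ := by
      rw [truncTime, hphi, ← ENNReal.ofReal_natCast, ← ENNReal.ofReal_mul hg.le,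
        min_eq_left (ENNReal.ofReal_le_ofReal hτt), ENNReal.toReal_ofReal (by positivity)]
    refine ⟨τ, hτn, fun i hi => ⟨fun h => ?_, fun h h' => ?_⟩, ?_⟩
    · by_contra hle
      exact h ⟨τ, h0, by omega, hE⟩
    · obtain ⟨j, hj0, hj, hjE⟩ := h'
      have := hmin j hj0 hjE
      omega
    · rw [hS, Nat.cast_add, Nat.cast_sub hτn, abs_le]
      push_cast
      constructor <;> nlinarith
  · refine ⟨n, le_rfl, fun i hi => ⟨fun _ => hi, fun _ h => hx (hitSet_mono T E hi.le h)⟩, ?_⟩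
    have hS : truncTime T E g t x = t := by
      have h1 := (phiRT_level (T := T) (E := E) (x := x) hg ht).not.2 hx
      rw [truncTime, min_eq_right (not_le.1 h1).le, ENNReal.toReal_ofReal ht]
    rw [hS]
    simp [abs_of_pos hg]

/-! ### The last-visit decomposition -/

lemma inter_hitSet_eq {X : Type*} (T : X → X) (Y E : Set X) (n : ℕ) :
    Y ∩ hitSet T E n
      = ⋃ j ∈ Finset.Icc 1 n, Y ∩ (T^[j]) ⁻¹' (E \ hitSet T E (n - j)) := by
  classical
  ext x
  simp only [mem_inter_iff, mem_iUnion, Finset.mem_Icc, mem_preimage, Set.mem_sdiff, exists_prop]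
  constructor
  · rintro ⟨hY, j₀, h0, hj, hE⟩
    -- the last visit at a time `≤ n`
    have hspec := Nat.findGreatest_spec (P := fun j => T^[j] x ∈ E) hj hE
    have hge := Nat.le_findGreatest (P := fun j => T^[j] x ∈ E) hj hE
    have hle := Nat.findGreatest_le (P := fun j => T^[j] x ∈ E) n
    refine ⟨Nat.findGreatest (fun j => T^[j] x ∈ E) n, ⟨by omega, hle⟩, hY, hspec, ?_⟩
    rintro ⟨i, hi0, hi, hiE⟩
    rw [← Function.iterate_add_apply] at hiE
    have := Nat.le_findGreatest (P := fun j => T^[j] x ∈ E) (n := n) (by omega) hiE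
    omega
  · rintro ⟨j, ⟨h1, h2⟩, hY, hE, -⟩
    exact ⟨hY, j, h1, h2, hE⟩

lemma measure_inter_hitSet {X : Type*} [MeasurableSpace X] {μ : Measure X} {T : X → X}
    (hT : Measurable T) {Y E : Set X} (hY : MeasurableSet Y) (hE : MeasurableSet E) (n : ℕ) :
    μ (Y ∩ hitSet T E n)
      = ∑ j ∈ Finset.Icc 1 n, μ (Y ∩ (T^[j]) ⁻¹' (E \ hitSet T E (n - j))) := by
  rw [inter_hitSet_eq, measure_biUnion_finset]
  · have key : ∀ i j x, i < j → j ≤ n → T^[i] x ∈ E \ hitSet T E (n - i) →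
        T^[j] x ∈ E \ hitSet T E (n - j) → False := by
      intro i j x hij hjn hi hj
      refine hi.2 ⟨j - i, by omega, by omega, ?_⟩
      rw [← Function.iterate_add_apply, Nat.sub_add_cancel hij.le]
      exact hj.1
    intro i hi j hj hij
    simp only [Finset.coe_Icc, mem_Icc] at hi hj
    refine Set.disjoint_left.2 fun x hxi hxj => ?_
    rcases lt_or_gt_of_ne hij with h | h
    · exact key i j x h hj.2 hxi.2 hxj.2
    · exact key j i x h hi.2 hxj.2 hxi.2
  · exact fun j _ => hY.inter (hT.iterate j (hE.diff (measurableSet_hitSet hT hE _)))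

lemma map_restrict_le {X : Type*} [MeasurableSpace X] {μ : Measure X} {T : X → X}
    (hT : MeasurePreserving T μ μ) (Y : Set X) (j : ℕ) :
    Measure.map (T^[j]) (μ.restrict Y) ≤ μ := by
  refine (Measure.map_mono Measure.restrict_le_self (hT.iterate j).measurable).trans ?_
  rw [(hT.iterate j).map_eq]

lemma measure_inter_preimage {X : Type*} [MeasurableSpace X] {μ : Measure X} [SigmaFinite μ]
    {T : X → X} (hT : MeasurePreserving T μ μ) {Y A : Set X} (hYf : μ Y < ∞)
    (hA : MeasurableSet A) (j : ℕ) :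
    μ (Y ∩ (T^[j]) ⁻¹' A) = ∫⁻ x in A, dkDens T μ Y j x ∂μ := by
  have : IsFiniteMeasure (μ.restrict Y) := ⟨by simpa using hYf⟩
  have hac : Measure.map (T^[j]) (μ.restrict Y) ≪ μ :=
    Measure.absolutelyContinuous_of_le (map_restrict_le hT Y j)
  have h := Measure.withDensity_rnDeriv_eq _ _ hac
  have h2 : Measure.map (T^[j]) (μ.restrict Y) A = ∫⁻ x in A, dkDens T μ Y j x ∂μ := by
    conv_lhs => rw [← h]
    rw [withDensity_apply _ hA]; rfl
  rw [← h2, Measure.map_apply (hT.iterate j).measurable hA,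
    Measure.restrict_apply ((hT.iterate j).measurable hA), inter_comm]

/-- Summation by parts behind the last-visit decomposition: at a point with truncated hitting time
`τ`, the visits that are last before time `n` are those at times `n - τ < j ≤ n`. -/
lemma sum_ite_eq_sub {c : ℕ → ℝ} {n τ : ℕ} (hτ : τ ≤ n) {P : ℕ → Prop} [DecidablePred P]
    (hP : ∀ i < n, P i ↔ i < τ) :
    ∑ j ∈ Finset.Icc 1 n, (if P (n - j) then c j else 0)
      = ∑ j ∈ Finset.range (n + 1), c j - ∑ j ∈ Finset.range (n - τ + 1), c j := by
  rw [← Finset.sum_Ico_eq_sub _ (by omega : n - τ + 1 ≤ n + 1), ← Finset.sum_filter]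
  refine Finset.sum_congr ?_ fun _ _ => rfl
  ext j
  simp only [Finset.mem_filter, Finset.mem_Icc, Finset.mem_Ico]
  constructor
  · rintro ⟨⟨h1, h2⟩, h3⟩
    have := (hP (n - j) (by omega)).1 h3
    omega
  · rintro ⟨h1, h2⟩
    exact ⟨⟨by omega, by omega⟩, (hP (n - j) (by omega)).2 (by omega)⟩

/-- The last-visit decomposition in integrated form. -/
lemma measure_hit_eq_integral {X : Type*} [MeasurableSpace X] {μ : Measure X} [SigmaFinite μ]
    {T : X → X} (hT : MeasurePreserving T μ μ) {Y E : Set X} (hY : MeasurableSet Y)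
    (hYf : μ Y < ∞) (hE : MeasurableSet E) {g t : ℝ} (hg : 0 < g) (ht : 0 ≤ t) :
    ∃ W : X → ℝ, Measurable W ∧
      (μ (Y ∩ hitSet T E ⌊t / g⌋₊)).toReal = ∫ x in E, W x ∂μ ∧
      ∀ᵐ x ∂μ, ∃ q : ℕ, q ≤ ⌊t / g⌋₊ + 1 ∧ |(q : ℝ) * g - (t - truncTime T E g t x)| ≤ g ∧
        W x = ∑ j ∈ Finset.range (⌊t / g⌋₊ + 1), (dkDens T μ Y j x).toReal
          - ∑ j ∈ Finset.range q, (dkDens T μ Y j x).toReal := by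
  classical
  have : IsFiniteMeasure (μ.restrict Y) := ⟨by simpa using hYf⟩
  set n := ⌊t / g⌋₊ with hn
  have hmH := measurableSet_hitSet hT.measurable hE
  have hmd : ∀ j, Measurable (dkDens T μ Y j) := fun j => Measure.measurable_rnDeriv _ _
  set V : X → ℝ≥0∞ := fun x =>
    ∑ j ∈ Finset.Icc 1 n, (hitSet T E (n - j))ᶜ.indicator (dkDens T μ Y j) x with hV
  have hVm : Measurable V := Finset.measurable_sum _ fun j _ => (hmd j).indicator (hmH _).compl
  have hfin : ∀ᵐ x ∂μ, ∀ j, dkDens T μ Y j x < ∞ := by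
    rw [ae_all_iff]; intro j
    exact Measure.rnDeriv_lt_top _ _
  have hVfin : ∀ᵐ x ∂μ, V x < ∞ := by
    filter_upwards [hfin] with x hx
    refine ENNReal.sum_lt_top.2 fun j _ => ?_
    exact (indicator_le_self _ _ x).trans_lt (hx j)
  refine ⟨fun x => (V x).toReal, hVm.ennreal_toReal, ?_, ?_⟩
  · rw [integral_toReal hVm.aemeasurable (ae_restrict_of_ae hVfin)]
    congr 1
    rw [measure_inter_hitSet hT.measurable hY hE, hV,
      lintegral_finsetSum _ fun j _ => (hmd j).indicator (hmH _).compl]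
    refine Finset.sum_congr rfl fun j _ => ?_
    rw [measure_inter_preimage hT hYf (hE.diff (hmH _)), lintegral_indicator (hmH _).compl,
      Measure.restrict_restrict (hmH _).compl, sdiff_eq, inter_comm]
  · filter_upwards [hfin] with x hx
    obtain ⟨τ, hτ, hiff, happ⟩ := exists_tau T E x hg ht
    refine ⟨n - τ + 1, by omega, happ, ?_⟩
    rw [← sum_ite_eq_sub (c := fun j => (dkDens T μ Y j x).toReal) hτ hiff, hV]
    simp only
    rw [ENNReal.toReal_sum fun j _ => ((indicator_le_self _ _ x).trans_lt (hx j)).ne]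
    refine Finset.sum_congr rfl fun j _ => ?_
    by_cases h : x ∈ hitSet T E (n - j) <;> simp [← hn, h]


/-! ### Hitting-time distributions as transforms of return-time distributions -/

lemma nrmDF_mono {X : Type*} [MeasurableSpace X] (μ : Measure X) (T : X → X) (γ : ℝ → ℝ)
    (A E : Set X) : Monotone (nrmDF μ T γ A E) := by
  intro s t hst
  refine ENNReal.toReal_mono ?_ ?_
  · exact ((ENNReal.div_le_div_right (measure_mono inter_subset_left) _).trans
      ENNReal.div_self_le_one).trans_lt ENNReal.one_lt_top |>.ne
  · refine ENNReal.div_le_div_right (measure_mono (inter_subset_inter_right _ ?_)) _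
    exact fun x hx => le_trans hx (ENNReal.ofReal_le_ofReal hst)

lemma nrmDF_mem_Icc {X : Type*} [MeasurableSpace X] (μ : Measure X) (T : X → X) (γ : ℝ → ℝ)
    (A E : Set X) (t : ℝ) : nrmDF μ T γ A E t ∈ Icc (0 : ℝ) 1 := by
  refine ⟨ENNReal.toReal_nonneg, ENNReal.toReal_le_of_le_ofReal zero_le_one ?_⟩
  rw [ENNReal.ofReal_one]
  exact (ENNReal.div_le_div_right (measure_mono inter_subset_left) _).trans
    ENNReal.div_self_le_one

lemma nrmDF_eq {X : Type*} [MeasurableSpace X] {μ : Measure X} {T : X → X} {γ : ℝ → ℝ}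
    {A E : Set X} {g t : ℝ} (hγ : γ (μ E).toReal = g) (hg : 0 < g) (ht : 0 ≤ t) :
    nrmDF μ T γ A E t = (μ (A ∩ hitSet T E ⌊t / g⌋₊)).toReal / (μ A).toReal := by
  have : {x | ENNReal.ofReal (γ (μ E).toReal) * phiRT T E x ≤ ENNReal.ofReal t}
      = hitSet T E ⌊t / g⌋₊ := by
    ext x
    rw [hγ]
    exact phiRT_level hg ht
  rw [nrmDF, condProb, this, ENNReal.toReal_div]

lemma nrmDF_zero {X : Type*} [MeasurableSpace X] {μ : Measure X} {T : X → X} {γ : ℝ → ℝ}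
    {A E : Set X} (hγ : 0 < γ (μ E).toReal) : nrmDF μ T γ A E 0 = 0 := by
  have : hitSet T E 0 = ∅ := by
    ext x; simp only [hitSet, mem_ofPred_eq, mem_empty_iff_false, iff_false]
    rintro ⟨j, h0, h1, -⟩
    omega
  rw [nrmDF_eq rfl hγ le_rfl, zero_div, Nat.floor_zero, this]
  simp

/-- Layer-cake formula: the transform of the return-time distribution is the mean over `E` of
`t ^ α - (t - min (g φ_E) t) ^ α`. -/
lemma integral_truncTime_eq {X : Type*} [MeasurableSpace X] {μ : Measure X} {T : X → X}
    (hT : Measurable T) {E : Set X} (hE : MeasurableSet E) (hE0 : 0 < μ E) (hEf : μ E < ∞)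
    {γ : ℝ → ℝ} {g t α : ℝ} (hγ : γ (μ E).toReal = g) (hg : 0 < g) (ht : 0 < t) (hα : 0 < α) :
    ∫ x in E, (t ^ α - (t - truncTime T E g t x) ^ α) ∂μ
      = (μ E).toReal * hitTr α (nrmDF μ T γ E E) t := by
  have hm : 0 < (μ E).toReal := ENNReal.toReal_pos hE0.ne' hEf.ne
  have hSm := measurable_truncTime hT hE g t
  have hS0 := truncTime_nonneg T E g t
  have hSt := truncTime_le T E g ht.le
  set R := nrmDF μ T γ E E with hR
  have hkerInt : ∀ x, ∫ s in (0 : ℝ)..truncTime T E g t x, |abelKer α t s|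
      = t ^ α - (t - truncTime T E g t x) ^ α := by
    intro x
    have h := integral_abelKer hα t 0 (truncTime T E g t x)
    rw [sub_zero] at h
    rw [← h]
    refine intervalIntegral.integral_congr fun s hs => ?_
    rw [uIcc_of_le (hS0 x)] at hs
    exact abs_of_nonneg (abelKer_nonneg hα (hs.2.trans (hSt x)))
  have hlay := lintegral_comp_eq_lintegral_meas_lt_mul (μ.restrict E)
    (f := truncTime T E g t) (g := fun s => |abelKer α t s|)
    (Eventually.of_forall hS0) hSm.aemeasurable
    (fun u _ => (abelKer_intervalIntegrable hα t 0 u).abs)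
    (Eventually.of_forall fun s => abs_nonneg _)
  simp only [hkerInt] at hlay
  have hmeas : ∀ s ∈ Ioo 0 t, (μ.restrict E) {x | s < truncTime T E g t x}
      = ENNReal.ofReal ((μ E).toReal * (1 - R s)) := by
    intro s hs
    have hset : {x | s < truncTime T E g t x} = (hitSet T E ⌊s / g⌋₊)ᶜ := by
      ext x
      rw [mem_compl_iff, ← phiRT_level hg hs.1.le]
      exact lt_truncTime_iff hs.1.le hs.2
    have hH := measurableSet_hitSet hT hE ⌊s / g⌋₊
    have hadd := measure_inter_add_sdiff (μ := μ) E hH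
    have hf1 : μ (E ∩ hitSet T E ⌊s / g⌋₊) ≠ ∞ :=
      ((measure_mono inter_subset_left).trans_lt hEf).ne
    have hf2 : μ (E \ hitSet T E ⌊s / g⌋₊) ≠ ∞ :=
      ((measure_mono sdiff_subset).trans_lt hEf).ne
    have hreal : (μ E).toReal = (μ (E ∩ hitSet T E ⌊s / g⌋₊)).toReal
        + (μ (E \ hitSet T E ⌊s / g⌋₊)).toReal := by
      rw [← hadd, ENNReal.toReal_add hf1 hf2]
    rw [hset, Measure.restrict_apply hH.compl, inter_comm, ← sdiff_eq, hR,
      nrmDF_eq hγ hg hs.1.le, mul_sub, mul_one, mul_div_cancel₀ _ hm.ne', hreal,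
      add_sub_cancel_left, ENNReal.ofReal_toReal hf2]
  have hR01 := nrmDF_mem_Icc μ T γ E E
  have hnn : ∀ s ∈ Ioo 0 t, 0 ≤ (μ E).toReal * ((1 - R s) * abelKer α t s) := fun s hs =>
    mul_nonneg hm.le (mul_nonneg (by linarith [(hR01 s).2]) (abelKer_nonneg hα hs.2.le))
  rw [integral_eq_lintegral_of_nonneg_ae, hlay, hitTr, ← intervalIntegral.integral_const_mul,
    intervalIntegral.integral_of_le ht.le, integral_Ioc_eq_integral_Ioo,
    integral_eq_lintegral_of_nonneg_ae]
  · congr 1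
    rw [← lintegral_indicator measurableSet_Ioi, ← lintegral_indicator measurableSet_Ioo]
    refine lintegral_congr fun s => ?_
    by_cases hs0 : 0 < s
    · by_cases hst : s < t
      · have hs : s ∈ Ioo 0 t := ⟨hs0, hst⟩
        rw [indicator_of_mem (show s ∈ Ioi 0 from hs0), indicator_of_mem hs, hmeas s hs,
          abs_of_nonneg (abelKer_nonneg hα hst.le), ← mul_assoc,
          ENNReal.ofReal_mul (mul_nonneg hm.le (by linarith [(hR01 s).2]))]
      · rw [indicator_of_mem (show s ∈ Ioi 0 from hs0),
          indicator_of_notMem (fun h => hst h.2)]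
        have : {x | s < truncTime T E g t x} = ∅ := by
          ext x
          simp only [mem_ofPred_eq, mem_empty_iff_false, iff_false, not_lt]
          exact (hSt x).trans (not_lt.1 hst)
        rw [this, measure_empty, zero_mul]
    · rw [indicator_of_notMem (show s ∉ Ioi 0 from hs0), indicator_of_notMem (fun h => hs0 h.1)]
  · filter_upwards [ae_restrict_mem measurableSet_Ioo] with s hs using hnn s hs
  · exact (((measurable_const.sub (nrmDF_mono μ T γ E E).measurable).mul
      (measurable_abelKer α t)).const_mul _).aestronglyMeasurable
  · refine Eventually.of_forall fun x => ?_
    exact sub_nonneg.2 (Real.rpow_le_rpow (by linarith [hSt x]) (by linarith [hS0 x]) hα.le)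
  · exact (measurable_const.sub ((measurable_const.sub hSm).pow_const α)).aestronglyMeasurable

/-- Quantitative duality between hitting and return times, for a single set `E` of measure
`1 / a B` and scale `1 / B`. -/
lemma abs_hit_sub_hitTr_le {X : Type*} [MeasurableSpace X] {μ : Measure X} [SigmaFinite μ]
    {T : X → X} (hT : MeasurePreserving T μ μ) {Y E : Set X} (hY : MeasurableSet Y)
    (hYf : μ Y < ∞) (hEY : E ⊆ Y) (hE : MeasurableSet E) (hE0 : 0 < μ E)
    {a γ : ℝ → ℝ} {B t α ε : ℝ} (hα : α ∈ Ioc (0 : ℝ) 1) (hγ : γ (μ E).toReal = 1 / B)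
    (haB : 0 < a B) (hB : 1 ≤ B) (hmB : (μ E).toReal = 1 / a B) (ht : 0 < t)
    (hBε : (1 / B) ^ α ≤ ε)
    (h1 : ∀ u ∈ Icc (0 : ℝ) (t + 1), |a (B * u) / a B - u ^ α| ≤ ε)
    (h2 : ∀ᵐ x ∂μ.restrict Y, ∀ q : ℕ, (q : ℝ) ≤ (t + 1) * B →
      |(∑ k ∈ Finset.range q, (dkDens T μ Y k x).toReal) / (μ Y).toReal - a q| ≤ ε * a B) :
    |nrmDF μ T γ Y E t - hitTr α (nrmDF μ T γ E E) t| ≤ 6 * ε := by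
  have hB0 : 0 < B := by linarith
  have hg : 0 < 1 / B := by positivity
  have hEf : μ E < ∞ := (measure_mono hEY).trans_lt hYf
  have hm : 0 < (μ E).toReal := ENNReal.toReal_pos hE0.ne' hEf.ne
  obtain ⟨W, hWm, hWint, hW⟩ := measure_hit_eq_integral hT hY hYf hE hg ht.le
  have hfloor : ((⌊t / (1 / B)⌋₊ + 1 : ℕ) : ℝ) ≤ (t + 1) * B := by
    have := Nat.floor_le (div_nonneg ht.le hg.le)
    rw [div_div_eq_mul_div, div_one] at this
    push_cast
    rw [div_div_eq_mul_div, div_one]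
    nlinarith
  have hfloor2 : |((⌊t / (1 / B)⌋₊ + 1 : ℕ) : ℝ) * (1 / B) - t| ≤ 1 / B := by
    have e1 := Nat.floor_le (div_nonneg ht.le hg.le)
    have e2 := Nat.lt_floor_add_one (t / (1 / B))
    rw [le_div_iff₀ hg] at e1
    rw [div_lt_iff₀ hg] at e2
    push_cast
    rw [abs_le]
    constructor <;> linarith
  have hSm := measurable_truncTime hT.measurable hE (1 / B) t
  have hS0 := truncTime_nonneg T E (1 / B) t
  have hSt := truncTime_le T E (1 / B) ht.le
  -- approximating one partial sum by a power
  have happ : ∀ᵐ x ∂μ.restrict E, ∀ (q : ℕ) (v : ℝ), (q : ℝ) ≤ (t + 1) * B → 0 ≤ v →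
      |(q : ℝ) * (1 / B) - v| ≤ 1 / B →
      |(∑ k ∈ Finset.range q, (dkDens T μ Y k x).toReal) / (μ Y).toReal / a B - v ^ α|
        ≤ 3 * ε := by
    filter_upwards [ae_restrict_of_ae_restrict_of_subset hEY h2] with x hx q v hq hv hqv
    have e1 := hx q hq
    have hq0 : 0 ≤ (q : ℝ) * (1 / B) := by positivity
    have e2 := h1 ((q : ℝ) * (1 / B)) ⟨hq0, by
      rw [mul_one_div, div_le_iff₀ hB0]; exact hq⟩
    have hBq : B * ((q : ℝ) * (1 / B)) = q := by field_simp
    rw [hBq] at e2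
    have e3 : |((q : ℝ) * (1 / B)) ^ α - v ^ α| ≤ ε :=
      ((abs_rpow_sub_rpow_le hα hq0 hv).trans
        (Real.rpow_le_rpow (abs_nonneg _) hqv hα.1.le)).trans hBε
    have e4 : |(∑ k ∈ Finset.range q, (dkDens T μ Y k x).toReal) / (μ Y).toReal / a B
        - a q / a B| ≤ ε := by
      rw [← sub_div, abs_div, abs_of_pos haB, div_le_iff₀ haB]
      exact e1
    rw [abs_le] at *
    constructor <;> linarith [e2.1, e2.2, e3.1, e3.2, e4.1, e4.2]
  have hbound : ∀ᵐ x ∂μ.restrict E,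
      ‖W x / (μ Y).toReal / a B - (t ^ α - (t - truncTime T E (1 / B) t x) ^ α)‖ ≤ 6 * ε := by
    filter_upwards [happ, ae_restrict_of_ae hW] with x hx ⟨q, hq, hqS, hWx⟩
    have hq' : (q : ℝ) ≤ (t + 1) * B := le_trans (by exact_mod_cast hq) hfloor
    have f1 := abs_le.1 (hx _ t hfloor ht.le hfloor2)
    have f2 := abs_le.1 (hx q (t - truncTime T E (1 / B) t x) hq' (by linarith [hSt x]) hqS)
    rw [hWx, sub_div, sub_div, Real.norm_eq_abs, abs_le]
    constructor <;> linarith [f1.1, f1.2, f2.1, f2.2]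
  have : IsFiniteMeasure (μ.restrict E) := ⟨by simpa using hEf⟩
  have hSint : Integrable (fun x => t ^ α - (t - truncTime T E (1 / B) t x) ^ α)
      (μ.restrict E) := by
    refine Integrable.of_bound
      (measurable_const.sub ((measurable_const.sub hSm).pow_const α)).aestronglyMeasurable
      (t ^ α) (Eventually.of_forall fun x => ?_)
    have g1 : 0 ≤ (t - truncTime T E (1 / B) t x) ^ α :=
      Real.rpow_nonneg (by linarith [hSt x]) _
    have g2 : (t - truncTime T E (1 / B) t x) ^ α ≤ t ^ α :=
      Real.rpow_le_rpow (by linarith [hSt x]) (by linarith [hS0 x]) hα.1.le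
    rw [Real.norm_eq_abs, abs_of_nonneg (by linarith)]
    linarith
  have hdiff : Integrable (fun x => W x / (μ Y).toReal / a B
      - (t ^ α - (t - truncTime T E (1 / B) t x) ^ α)) (μ.restrict E) :=
    Integrable.of_bound (((hWm.div_const _).div_const _).sub
      (measurable_const.sub ((measurable_const.sub hSm).pow_const α))).aestronglyMeasurable
      _ hbound
  have hWi : Integrable (fun x => W x / (μ Y).toReal / a B) (μ.restrict E) := by
    exact (hdiff.add hSint).congr (Eventually.of_forall fun x => sub_add_cancel _ _)
  have hest := norm_integral_le_of_norm_le_const hbound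
  rw [integral_sub hWi hSint, integral_div, integral_div, ← hWint,
    integral_truncTime_eq hT.measurable hE hE0 hEf hγ hg ht hα.1, ← nrmDF_eq hγ hg ht.le,
    div_eq_mul_one_div, ← hmB, mul_comm, ← mul_sub, norm_mul, measureReal_restrict_apply_univ,
    Real.norm_of_nonneg hm.le, Measure.real, mul_comm (6 * ε)] at hest
  exact le_of_mul_le_mul_left hest hm

/-- Characterizing convergence to `H_α`: both normalized return- and
hitting-time distributions converge to the fixed point `F` of
`F(t) = ∫_0^t (1−F(s))·α·(t−s)^{α−1} ds` (i.e. to `H_α`), if and only if the two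
distributions are asymptotically equal on a dense set of points `t` in `(0,∞)`. -/
theorem stmt17 {X : Type*} [MeasurableSpace X] (μ : Measure X) [SigmaFinite μ]
    (T : X → X) (hT : CEMPT T μ) (hInf : μ Set.univ = ∞)
    (a b γT : ℝ → ℝ) (ha : IsScalingFunction a)
    (Y : Set X) (hDK : IsDKSet T μ Y a)
    (α : ℝ) (hα : α ∈ Set.Ioc (0 : ℝ) 1) (hreg : RegVary a α)
    (hb : ∀ x : ℝ, 0 ≤ x → b (a x) = x) (hb' : ∀ y : ℝ, 0 ≤ y → a (b y) = y)
    (hγ : ∀ s : ℝ, 0 < s → γT s = 1 / b (1 / s))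
    (E : ℕ → Set X) (hE : ∀ k, E k ⊆ Y ∧ MeasurableSet (E k) ∧ 0 < μ (E k))
    (hE0 : Tendsto (fun k => μ (E k)) atTop (𝓝 0)) :
    (∃ F : ℝ → ℝ, MemF F ∧
        (∀ t : ℝ, 0 ≤ t →
          F t = ∫ s in (0 : ℝ)..t, (1 - F s) * (α * (t - s) ^ (α - 1))) ∧
        VagueConv (fun k => nrmDF μ T γT (E k) (E k)) F ∧
        VagueConv (fun k => nrmDF μ T γT Y (E k)) F) ↔
      (∃ D : Set ℝ, D ⊆ Set.Ioi 0 ∧ Set.Ioi (0 : ℝ) ⊆ closure D ∧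
        ∀ t ∈ D, Tendsto
          (fun k => nrmDF μ T γT (E k) (E k) t - nrmDF μ T γT Y (E k) t)
          atTop (𝓝 0)) := by
  obtain ⟨hYm, hY0, hYf, -⟩ := id hDK
  have hMP : MeasurePreserving T μ μ := hT.2.toMeasurePreserving
  have hEf : ∀ k, μ (E k) < ∞ := fun k => (measure_mono (hE k).1).trans_lt hYf
  have hm : ∀ k, 0 < (μ (E k)).toReal := fun k =>
    ENNReal.toReal_pos (hE k).2.2.ne' (hEf k).ne
  set B : ℕ → ℝ := fun k => b (1 / (μ (E k)).toReal) with hB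
  have haBk : ∀ k, a (B k) = 1 / (μ (E k)).toReal := fun k => hb' _ (by have := hm k; positivity)
  have hBpos : ∀ k, 0 < B k := by
    intro k
    obtain ⟨x, hx, hax⟩ := ha.2.2.2.2 (1 / (μ (E k)).toReal) (by have := hm k; positivity)
    have hBx : B k = x := by rw [hB]; simp only; rw [← hax, hb x hx]
    rw [hBx]
    refine lt_of_le_of_ne hx fun h0 => ?_
    rw [← h0, ha.1] at hax
    have := hm k
    have : 0 < 1 / (μ (E k)).toReal := by positivity
    linarith
  have hγB : ∀ k, γT (μ (E k)).toReal = 1 / B k := fun k => hγ _ (hm k)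
  have hγpos : ∀ k, 0 < γT (μ (E k)).toReal := fun k => by
    rw [hγB]; have := hBpos k; positivity
  have hBlim : Tendsto B atTop atTop := by
    have hmlim : Tendsto (fun k => (μ (E k)).toReal) atTop (𝓝[>] 0) := by
      refine tendsto_nhdsWithin_iff.2 ⟨?_, Eventually.of_forall hm⟩
      have h0 := (ENNReal.tendsto_toReal ENNReal.zero_ne_top).comp hE0
      rwa [ENNReal.toReal_zero] at h0
    have haB : Tendsto (fun k => a (B k)) atTop atTop := by
      simp only [haBk, one_div]
      exact tendsto_inv_nhdsGT_zero.comp hmlim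
    rw [tendsto_atTop]
    intro c
    filter_upwards [haB.eventually (eventually_gt_atTop (a (max c 0)))] with k hk
    by_contra hlt
    push Not at hlt
    have := ha.mono (hBpos k).le (hlt.le.trans (le_max_left c 0))
    linarith
  -- the duality relation between hitting-time and return-time distributions
  have hdual : ∀ t, 0 < t → Tendsto (fun k => nrmDF μ T γT Y (E k) t
      - hitTr α (nrmDF μ T γT (E k) (E k)) t) atTop (𝓝 0) := by
    intro t ht
    rw [Metric.tendsto_nhds]
    intro ε hε
    have hε' : 0 < ε / 7 := by positivity
    have hsmall : Tendsto (fun y : ℝ => (1 / y) ^ α) atTop (𝓝 0) := by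
      refine (tendsto_rpow_neg_atTop hα.1).congr' ?_
      filter_upwards [eventually_gt_atTop 0] with r hr
      rw [one_div, Real.inv_rpow hr.le, Real.rpow_neg hr.le]
    filter_upwards [hBlim.eventually (regVary_uniform ha hα hreg (U := t + 1) hε'),
      hBlim.eventually (dk_uniform ha hreg hDK (by linarith : 0 < t + 1) hε'),
      hBlim.eventually (eventually_ge_atTop 1),
      hBlim.eventually (hsmall.eventually (Iic_mem_nhds hε'))] with k k1 k2 k3 k4
    have := abs_hit_sub_hitTr_le hMP hYm hYf (hE k).1 (hE k).2.1 (hE k).2.2 hα (hγB k)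
      (ha.pos (hBpos k)) k3 (by rw [haBk, one_div_one_div]) ht k4 k1 k2
    rw [Real.dist_eq, sub_zero]
    linarith
  constructor
  · rintro ⟨F, ⟨hFm, -, -⟩, -, hR, hG⟩
    -- `F` has only countably many discontinuities
    have hmono : Monotone fun t => F (max t 0) := fun s t hst =>
      hFm (le_max_right _ _) (max_le_max_right 0 hst)
    set N := {x | ¬ ContinuousAt (fun t => F (max t 0)) x} with hN
    have hc : N.Countable := hmono.countable_not_continuousAt
    refine ⟨Ioi 0 ∩ Nᶜ, inter_subset_left, ?_, ?_⟩
    · exact (hc.dense_compl ℝ).open_subset_closure_inter isOpen_Ioi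
    · rintro t ⟨ht, htN⟩
      have ht0 : (0 : ℝ) < t := ht
      have hcont : ContinuousAt (fun t => F (max t 0)) t := not_not.1 htN
      have hF : ContinuousWithinAt F (Ici 0) t := by
        refine hcont.continuousWithinAt.congr (fun y hy => ?_) ?_
        · rw [max_eq_left hy]
        · rw [max_eq_left ht0.le]
      simpa using (hR t ht0.le hF).sub (hG t ht0.le hF)
  · rintro ⟨D, hD0, hD, hDlim⟩
    have hRm := fun k => nrmDF_mono μ T γT (E k) (E k)
    have hR01 := fun k => nrmDF_mem_Icc μ T γT (E k) (E k)
    have hself : ∀ t, 0 < t → Tendsto (fun k => nrmDF μ T γT (E k) (E k) t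
        - hitTr α (nrmDF μ T γT (E k) (E k)) t) atTop (𝓝 0) := fun t ht =>
      sub_hitTr_tendsto_of_dense hα hRm hR01 hdual hD0 hD hDlim ht
    obtain ⟨F, hFm, hF01, hFeq, hFlim⟩ := exists_limit_of_sub_hitTr hα.1 hRm hR01
      (fun k => nrmDF_zero (hγpos k)) hself
    refine ⟨F, ⟨fun s t _ hst => hFm hst, fun t _ => hF01 t, fun t ht => ?_⟩, hFeq,
      fun t ht _ => hFlim t ht, fun t ht _ => ?_⟩
    -- right-continuity follows from the Hölder bound on the transform
    · have hlim : Tendsto (fun u => F t + (u - t) ^ α) (𝓝[≥] t) (𝓝 (F t)) := by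
        have hc : Continuous fun u : ℝ => F t + (u - t) ^ α :=
          continuous_const.add ((continuous_id.sub continuous_const).rpow_const
            fun _ => Or.inr hα.1.le)
        have := (hc.tendsto t).mono_left (nhdsWithin_le_nhds (s := Ici t))
        simpa [Real.zero_rpow hα.1.ne'] using this
      refine tendsto_of_tendsto_of_tendsto_of_le_of_le' tendsto_const_nhds hlim ?_ ?_
      · filter_upwards [self_mem_nhdsWithin] with u hu using hFm hu
      · filter_upwards [self_mem_nhdsWithin] with u hu
        have hu' : t ≤ u := hu
        rw [hFeq t ht, hFeq u (ht.trans hu')]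
        exact hitTr_le_add hα hFm.measurable hF01 ht hu'
    · rcases ht.eq_or_lt with rfl | ht0
      · have h0 : F 0 = 0 := by rw [hFeq 0 le_rfl]; simp [hitTr]
        rw [h0]
        simp only [nrmDF_zero (hγpos _)]
        exact tendsto_const_nhds
      · have := ((hdual t ht0).sub (hself t ht0)).add (hFlim t ht)
        simpa using this
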